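/- Let p be a prime and G a finite abelian group such that p is 2-small with respect to exp(G). Then for all positive integers m and n, k(C_{p^m} ⊕ C_{p^n} ⊕ G) = k(C_{p^m}) + k(C_{p^n}) + k(G). -/

import Mathlib

/-- The cross number `k(S)` of a sequence (finite multiset) `S` over an additive group:
the sum, with multiplicity, of the reciprocals of the orders of its elements. -/
noncomputable def crossNum {G : Type*} [AddCommGroup G] (S : Multiset G) : ℝ :=
  (S.map fun g => ((addOrderOf g : ℝ))⁻¹).sum

/-- `S` is zero-sum free: no nonempty sub-multiset of `S` has sum `0`. -/
def IsZeroSumFree {G : Type*} [AddCommGroup G] (S : Multiset G) : Prop :=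
  ∀ T : Multiset G, T ≤ S → T ≠ 0 → T.sum ≠ 0

/-- The little cross number `k(G)`: the maximal cross number of a zero-sum free
sequence over `G`. -/
noncomputable def littleK (G : Type*) [AddCommGroup G] : ℝ :=
  sSup {x : ℝ | ∃ S : Multiset G, IsZeroSumFree S ∧ crossNum S = x}

/-- A prime `p` is 2-small with respect to `n` (written `p ≺² n`) if `p ∤ n` and
`(2p+2)/(2p+1) > ∑_{d ∣ n} 1/d`. -/
def TwoSmall (p n : ℕ) : Prop :=
  ¬ p ∣ n ∧ ((2 * p + 2 : ℚ) / (2 * p + 1)) > ∑ d ∈ n.divisors, (1 : ℚ) / d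

/-!
Let `P = C_{p^m} ⊕ C_{p^n}`. A zero-sum free sequence `R` over `P ⊕ G` is certified by a function
`φ : P → 𝔽_p` which is nonzero at `0` but vanishes at every nonempty subsequence sum of `R` lying in
`P`. The claim is that `k(R) ≤ k(G) + ε` if `φ` has degree at most `ε`, where differentiating in
direction `a` costs `1 / ord a`. The indicator function of `0` certifies every `R`, and its degree
is at most `k(C_{p^m}) + k(C_{p^n})`, since `[1] - 1` is nilpotent of index `p^m` in
`𝔽_p[C_{p^m}]`.

An element `a ∈ P` of `R` can be removed by differentiating `φ` in direction `a`, at the same cost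
to both sides. If `ε < 1 / p`, then `φ` is invariant under the elements of order `p` and lives on
`p • P`, where elements have orders smaller by a factor `p`. If `ε ≥ 1 / p`, the elements of `R` are
grouped by the order `d ≠ 1` of their second component: replacing subsequences with sum in `G` by
their sums turns `R` into a zero-sum free sequence over `G`, at the cost of `2 / d` for each `d`.
The total cost is at most `1 / p` because `p` is 2-small.
-/

section CrossNumber

variable {G H : Type*} [AddCommGroup G] [AddCommGroup H]

@[simp] lemma crossNum_zero : crossNum (0 : Multiset G) = 0 := by simp [crossNum]

@[simp] lemma crossNum_cons (a : G) (S : Multiset G) :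
    crossNum (a ::ₘ S) = (addOrderOf a : ℝ)⁻¹ + crossNum S := by simp [crossNum]

@[simp] lemma crossNum_singleton (a : G) : crossNum {a} = (addOrderOf a : ℝ)⁻¹ := by
  simp [crossNum]

@[simp] lemma crossNum_add (S T : Multiset G) : crossNum (S + T) = crossNum S + crossNum T := by
  simp [crossNum]

lemma crossNum_map_eq_mul {f : G → H} {S : Multiset G} {c : ℝ}
    (h : ∀ a ∈ S, (addOrderOf (f a) : ℝ)⁻¹ = c * (addOrderOf a : ℝ)⁻¹) :
    crossNum (S.map f) = c * crossNum S := by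
  rw [crossNum, crossNum, Multiset.map_map, ← Multiset.sum_map_mul_left]
  exact congrArg Multiset.sum (Multiset.map_congr rfl h)

lemma crossNum_map_of_addOrderOf_eq {f : G → H} {S : Multiset G}
    (h : ∀ a ∈ S, addOrderOf (f a) = addOrderOf a) : crossNum (S.map f) = crossNum S := by
  rw [crossNum_map_eq_mul (c := 1) fun a ha => by rw [h a ha, one_mul], one_mul]

lemma natCast_inv_le_of_dvd {m n : ℕ} (h : m ∣ n) : (n : ℝ)⁻¹ ≤ (m : ℝ)⁻¹ := by
  rcases n.eq_zero_or_pos with rfl | hn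
  · simp
  · have hm : 0 < m := Nat.pos_of_dvd_of_pos h hn
    have hmn : m ≤ n := Nat.le_of_dvd hn h
    gcongr

lemma crossNum_le_crossNum_map {f : G → H} {S : Multiset G}
    (h : ∀ a ∈ S, addOrderOf (f a) ∣ addOrderOf a) : crossNum S ≤ crossNum (S.map f) := by
  rw [crossNum, crossNum, Multiset.map_map]
  exact Multiset.sum_map_le_sum_map _ _ fun a ha => natCast_inv_le_of_dvd (h a ha)

lemma natCast_sum_div_addOrderOf {q : ℕ} {S : Multiset G} (hS : ∀ a ∈ S, addOrderOf a ∣ q) :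
    (((S.map fun a => q / addOrderOf a).sum : ℕ) : ℝ) = q * crossNum S := by
  rw [Nat.cast_multiset_sum, Multiset.map_map, crossNum, ← Multiset.sum_map_mul_left]
  refine congrArg Multiset.sum (Multiset.map_congr rfl fun a ha => ?_)
  rw [Function.comp_apply, Nat.cast_div_charZero (hS a ha), div_eq_mul_inv]

-- The cross number of `S` is an integral multiple of `1 / q`.
lemma one_le_crossNum {q : ℕ} {S : Multiset G} (hS : ∀ a ∈ S, addOrderOf a ∣ q)
    (h : 1 - (q : ℝ)⁻¹ < crossNum S) : 1 ≤ crossNum S := by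
  rcases q.eq_zero_or_pos with rfl | hq
  · simpa using h.le
  have hq' : (0 : ℝ) < q := by exact_mod_cast hq
  have hlt : (q : ℝ) < ((S.map fun a => q / addOrderOf a).sum : ℕ) + 1 := by
    rw [natCast_sum_div_addOrderOf hS]
    have := mul_lt_mul_of_pos_left h hq'
    rw [mul_sub, mul_inv_cancel₀ hq'.ne'] at this
    linarith
  have hle : (q : ℝ) ≤ ((S.map fun a => q / addOrderOf a).sum : ℕ) := by
    exact_mod_cast Nat.lt_succ_iff.1 (by exact_mod_cast hlt)
  rw [natCast_sum_div_addOrderOf hS] at hle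
  exact (le_mul_iff_one_le_right hq').1 hle

end CrossNumber

section ZeroSumFree

lemma exists_map_eq_of_le_map {α β : Type*} {f : α → β} {S : Multiset α} {T : Multiset β}
    (h : T ≤ S.map f) : ∃ T' ≤ S, T'.map f = T := by
  induction S using Quotient.inductionOn with | _ l
  induction T using Quotient.inductionOn with | _ t
  obtain ⟨t', ht', hsub⟩ := h
  obtain ⟨l', hl', rfl⟩ := List.sublist_map_iff.1 hsub
  exact ⟨l', Multiset.coe_le.2 hl'.subperm, Quotient.sound ht'⟩

variable {G H : Type*} [AddCommGroup G] [AddCommGroup H]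

lemma isZeroSumFree_zero : IsZeroSumFree (0 : Multiset G) :=
  fun _ hT hT0 => absurd (Multiset.le_zero.1 hT) hT0

lemma IsZeroSumFree.mono {S T : Multiset G} (hT : IsZeroSumFree T) (h : S ≤ T) :
    IsZeroSumFree S :=
  fun U hU => hT U (hU.trans h)

lemma IsZeroSumFree.sum_cons {T W : Multiset G} (h : IsZeroSumFree (T + W)) (hT : T ≠ 0) :
    IsZeroSumFree (T.sum ::ₘ W) := by
  intro A hA hA0
  by_cases hmem : T.sum ∈ A
  · obtain ⟨B, rfl⟩ := Multiset.exists_cons_of_mem hmem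
    have hB : B ≤ W := (Multiset.cons_le_cons_iff _).1 hA
    rw [Multiset.sum_cons, ← Multiset.sum_add]
    exact h _ (by gcongr) (by simp [hT])
  · have hAW : A ≤ W := (Multiset.le_cons_of_notMem hmem).1 hA
    exact h A (hAW.trans (Multiset.le_add_left _ _)) hA0

lemma IsZeroSumFree.map {S : Multiset G} (hS : IsZeroSumFree S) (f : G →+ H)
    (hf : ∀ T ≤ S, f T.sum = 0 → T.sum = 0) : IsZeroSumFree (S.map f) := by
  intro T hT hT0 hsum
  obtain ⟨T, hTS, rfl⟩ := exists_map_eq_of_le_map hT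
  rw [← map_multiset_sum] at hsum
  exact hS T hTS (by rintro rfl; simp at hT0) (hf T hTS hsum)

lemma IsZeroSumFree.map_of_injective {S : Multiset G} (hS : IsZeroSumFree S) (f : G →+ H)
    (hf : Function.Injective f) : IsZeroSumFree (S.map f) :=
  hS.map f fun _ _ h => (map_eq_zero_iff f hf).1 h

lemma IsZeroSumFree.map_inl_add_map_inr {S : Multiset G} {T : Multiset H} (hS : IsZeroSumFree S)
    (hT : IsZeroSumFree T) :
    IsZeroSumFree (S.map (AddMonoidHom.inl G H) + T.map (AddMonoidHom.inr G H)) := by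
  classical
  intro X hX hX0 hsum
  set B := T.map (AddMonoidHom.inr G H)
  obtain ⟨Y, hY, hYX⟩ := exists_map_eq_of_le_map (tsub_le_iff_right.2 hX)
  obtain ⟨Z, hZ, hZX⟩ := exists_map_eq_of_le_map (Multiset.inter_le_right : X ∩ B ≤ B)
  rw [← Multiset.sub_add_inter X B, ← hYX, ← hZX] at hX0 hsum
  rw [Multiset.sum_add, ← map_multiset_sum, ← map_multiset_sum] at hsum
  obtain ⟨hY0, hZ0⟩ : Y.sum = 0 ∧ Z.sum = 0 := by simpa using hsum
  refine hX0 ?_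
  rw [not_imp_not.1 (hS Y hY) hY0, not_imp_not.1 (hT Z hZ) hZ0]
  rfl

end ZeroSumFree

section LittleCrossNumber

variable {G H : Type*} [AddCommGroup G] [AddCommGroup H]

lemma IsZeroSumFree.count_lt_addOrderOf [DecidableEq G] [Finite G] {S : Multiset G}
    (hS : IsZeroSumFree S) (g : G) : S.count g < addOrderOf g := by
  by_contra! hle
  refine hS (Multiset.replicate (addOrderOf g) g) (Multiset.le_count_iff_replicate_le.1 hle) ?_
    (by simp [addOrderOf_nsmul_eq_zero])
  rw [← Multiset.card_pos, Multiset.card_replicate]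
  exact addOrderOf_pos g

lemma IsZeroSumFree.crossNum_le_card [Finite G] {S : Multiset G} (hS : IsZeroSumFree S) :
    crossNum S ≤ Nat.card G := by
  classical
  have := Fintype.ofFinite G
  calc crossNum S = ∑ g ∈ S.toFinset, S.count g • (addOrderOf g : ℝ)⁻¹ :=
        Finset.sum_multiset_map_count _ _
    _ ≤ ∑ g ∈ S.toFinset, 1 := by
        refine Finset.sum_le_sum fun g _ => ?_
        have hpos : (0 : ℝ) < addOrderOf g := by exact_mod_cast addOrderOf_pos g
        rw [nsmul_eq_mul, ← div_eq_mul_inv, div_le_one hpos]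
        exact_mod_cast (hS.count_lt_addOrderOf g).le
    _ ≤ Nat.card G := by
        rw [Finset.sum_const, nsmul_one, Nat.card_eq_fintype_card]
        exact_mod_cast Finset.card_le_univ _

lemma IsZeroSumFree.crossNum_le_littleK [Finite G] {S : Multiset G} (hS : IsZeroSumFree S) :
    crossNum S ≤ littleK G := by
  refine le_csSup ⟨Nat.card G, ?_⟩ ⟨S, hS, rfl⟩
  rintro _ ⟨T, hT, rfl⟩
  exact hT.crossNum_le_card

lemma littleK_le {K : ℝ} (h : ∀ S : Multiset G, IsZeroSumFree S → crossNum S ≤ K) :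
    littleK G ≤ K := by
  refine csSup_le ⟨0, 0, isZeroSumFree_zero, crossNum_zero⟩ ?_
  rintro _ ⟨S, hS, rfl⟩
  exact h S hS

lemma littleK_le_of_injective [Finite H] (f : G →+ H) (hf : Function.Injective f) :
    littleK G ≤ littleK H := by
  refine littleK_le fun S hS => ?_
  rw [← crossNum_map_of_addOrderOf_eq fun a _ => addOrderOf_injective f hf a]
  exact (hS.map_of_injective f hf).crossNum_le_littleK

lemma littleK_add_le_littleK_prod [Finite G] [Finite H] :
    littleK G + littleK H ≤ littleK (G × H) := by
  rw [← le_sub_iff_add_le]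
  refine littleK_le fun S hS => ?_
  rw [le_sub_comm]
  refine littleK_le fun T hT => ?_
  rw [le_sub_iff_add_le', ← crossNum_map_of_addOrderOf_eq (f := AddMonoidHom.inl G H) fun a _ =>
      addOrderOf_injective (.inl G H) (Prod.mk_left_injective 0) a,
    ← crossNum_map_of_addOrderOf_eq (f := AddMonoidHom.inr G H) fun a _ =>
      addOrderOf_injective (.inr G H) (Prod.mk_right_injective 0) a, ← crossNum_add]
  exact (hS.map_inl_add_map_inr hT).crossNum_le_littleK

lemma isZeroSumFree_replicate (g : G) :
    IsZeroSumFree (Multiset.replicate (addOrderOf g - 1) g) := by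
  intro T hT hT0 hsum
  obtain ⟨j, hj, rfl⟩ := Multiset.le_replicate_iff.1 hT
  rw [Multiset.sum_replicate] at hsum
  have hj0 : 0 < j := Nat.pos_of_ne_zero fun h => hT0 (by rw [h, Multiset.replicate_zero])
  have := Nat.le_of_dvd hj0 (addOrderOf_dvd_of_nsmul_eq_zero hsum)
  omega

lemma one_sub_inv_addOrderOf_le_littleK [Finite G] (g : G) :
    1 - (addOrderOf g : ℝ)⁻¹ ≤ littleK G := by
  refine le_trans (le_of_eq ?_) (isZeroSumFree_replicate g).crossNum_le_littleK
  have hpos : 0 < addOrderOf g := addOrderOf_pos g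
  have hne : (addOrderOf g : ℝ) ≠ 0 := by exact_mod_cast hpos.ne'
  rw [crossNum, Multiset.map_replicate, Multiset.sum_replicate, nsmul_eq_mul,
    Nat.cast_pred hpos, sub_mul, mul_inv_cancel₀ hne, one_mul]

end LittleCrossNumber

section GroupAlgebra

open AddMonoidAlgebra

variable {P Q : Type*} [AddCommGroup P] [AddCommGroup Q] {p : ℕ}

/-- The element `[a] - 1` of the group algebra `𝔽_p[P]`; multiplication by it is the difference
operator in direction `a`. -/
noncomputable def diffElem (p : ℕ) (a : P) : (ZMod p)[P] := single a 1 - 1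

/-- The product of the elements `[a] - 1` of `𝔽_p[P]` over a sequence of elements `a`. -/
noncomputable def diffProd (p : ℕ) (S : Multiset P) : (ZMod p)[P] := (S.map (diffElem p)).prod

@[simp] lemma diffElem_zero : diffElem p (0 : P) = 0 := by rw [diffElem, ← one_def, sub_self]

@[simp] lemma diffProd_zero : diffProd p (0 : Multiset P) = 1 := by simp [diffProd]

@[simp] lemma diffProd_cons (a : P) (S : Multiset P) :
    diffProd p (a ::ₘ S) = diffElem p a * diffProd p S := by simp [diffProd]

lemma diffProd_eq_zero_of_zero_mem {S : Multiset P} (h : (0 : P) ∈ S) : diffProd p S = 0 :=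
  Multiset.prod_eq_zero (Multiset.mem_map.2 ⟨0, h, diffElem_zero⟩)

lemma mapDomainRingHom_diffElem (f : P →+ Q) (a : P) :
    mapDomainRingHom (ZMod p) f (diffElem p a) = diffElem p (f a) := by
  rw [diffElem, map_sub, map_one, mapDomainRingHom_apply, mapDomain_single, diffElem]

lemma mapDomainRingHom_diffProd (f : P →+ Q) (S : Multiset P) :
    mapDomainRingHom (ZMod p) f (diffProd p S) = diffProd p (S.map f) := by
  rw [diffProd, map_multiset_prod, diffProd, Multiset.map_map, Multiset.map_map]
  exact congrArg Multiset.prod (Multiset.map_congr rfl fun a _ => mapDomainRingHom_diffElem f a)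

lemma mapDomainRingHom_surjective {f : P →+ Q} (hf : Function.Surjective f) :
    Function.Surjective (mapDomainRingHom (ZMod p) f) := fun u =>
  ⟨mapDomain (Function.surjInv hf) u, by
    ext; simp [← Finsupp.mapDomain_comp, Function.RightInverse.comp_eq_id (Function.surjInv_eq hf)]⟩

lemma diffElem_prodMk (a : P) (b : Q) :
    diffElem p (a, b) = diffElem p (a, 0) * single (0, b) 1 + diffElem p (0, b) := by
  have hab : (single (a, b) 1 : (ZMod p)[P × Q]) = single (a, 0) 1 * single (0, b) 1 := by
    rw [single_mul_single]; simp
  rw [diffElem, diffElem, diffElem, hab]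
  ring

lemma diffElem_dvd_diffElem_nsmul (n : ℕ) (a : P) : diffElem p a ∣ diffElem p (n • a) := by
  have hpow : (single (n • a) 1 : (ZMod p)[P]) = single a 1 ^ n := by rw [single_pow, one_pow]
  rw [diffElem, diffElem, hpow]
  exact sub_one_dvd_pow_sub_one _ n

lemma diffElem_pow_nsmul [Fact p.Prime] (k : ℕ) (a : P) :
    diffElem p (p ^ k • a) = diffElem p a ^ p ^ k := by
  have : CharP (ZMod p)[P] p :=
    charP_of_injective_algebraMap (algebraMap (ZMod p) (ZMod p)[P]).injective p
  rw [diffElem, diffElem, sub_pow_char_pow, one_pow, single_pow, one_pow]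

/-- In `𝔽_p[P]`, the product of the `[a] - 1` over a sequence `S` of elements of order dividing `q`
vanishes as soon as `k(S) > κ`. Taking `q = 0` imposes no condition on the orders. -/
def VanishesAbove (p : ℕ) (P : Type*) [AddCommGroup P] (q : ℕ) (κ : ℝ) : Prop :=
  ∀ S : Multiset P, (∀ a ∈ S, addOrderOf a ∣ q) → κ < crossNum S → diffProd p S = 0

lemma VanishesAbove.of_injective {q : ℕ} {κ : ℝ} (h : VanishesAbove p Q q κ) (f : P →+ Q)
    (hf : Function.Injective f) : VanishesAbove p P q κ := by
  intro S hS hκ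
  have hord : ∀ a, addOrderOf (f a) = addOrderOf a := addOrderOf_injective f hf
  refine (map_eq_zero_iff (mapDomainRingHom (ZMod p) f) (mapDomain_injective hf)).1 ?_
  rw [mapDomainRingHom_diffProd]
  refine h _ ?_ (by rwa [crossNum_map_of_addOrderOf_eq fun a _ => hord a])
  simpa only [Multiset.forall_mem_map_iff, hord] using hS

/-- Expanding `[(a, b)] - 1 = ([(a, 0)] - 1) [(0, b)] + ([(0, b)] - 1)` factor by factor, each term
moves every element of `S` to one of the two components, without decreasing the cross number. -/
lemma VanishesAbove.prod {q : ℕ} {κ₁ κ₂ : ℝ} (h₁ : VanishesAbove p P q κ₁)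
    (h₂ : VanishesAbove p Q q κ₂) : VanishesAbove p (P × Q) q (κ₁ + κ₂) := by
  suffices key : ∀ (S : Multiset (P × Q)) (U : Multiset P) (V : Multiset Q),
      (∀ a ∈ S, addOrderOf a ∣ q) → (∀ a ∈ U, addOrderOf a ∣ q) → (∀ a ∈ V, addOrderOf a ∣ q) →
      κ₁ + κ₂ < crossNum S + crossNum U + crossNum V →
      diffProd p S * (mapDomainRingHom (ZMod p) (.inl P Q) (diffProd p U) *
        mapDomainRingHom (ZMod p) (.inr P Q) (diffProd p V)) = 0 by
    intro S hS hκ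
    simpa using key S 0 0 hS (by simp) (by simp) (by simpa using hκ)
  intro S
  induction S using Multiset.induction_on with
  | empty =>
    intro U V _ hU hV hκ
    rw [crossNum_zero, zero_add] at hκ
    rcases lt_or_ge κ₁ (crossNum U) with h | h
    · simp [h₁ U hU h]
    · simp [h₂ V hV (by linarith)]
  | cons a S ih =>
    obtain ⟨b, c⟩ := a
    intro U V hS hU hV hκ
    rw [Multiset.forall_mem_cons] at hS
    have hb : addOrderOf b ∣ addOrderOf (b, c) := addOrderOf_fst_dvd_addOrderOf
    have hc : addOrderOf c ∣ addOrderOf (b, c) := addOrderOf_snd_dvd_addOrderOf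
    rw [crossNum_cons] at hκ
    have hbU := ih (b ::ₘ U) V hS.2 (by simpa using ⟨hb.trans hS.1, hU⟩) hV
      (by rw [crossNum_cons]; linarith [natCast_inv_le_of_dvd hb])
    have hcV := ih U (c ::ₘ V) hS.2 hU (by simpa using ⟨hc.trans hS.1, hV⟩)
      (by rw [crossNum_cons]; linarith [natCast_inv_le_of_dvd hc])
    rw [diffProd_cons, map_mul, mapDomainRingHom_diffElem, AddMonoidHom.inl_apply] at hbU
    rw [diffProd_cons, map_mul, mapDomainRingHom_diffElem, AddMonoidHom.inr_apply] at hcV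
    rw [diffProd_cons, diffElem_prodMk]
    linear_combination single (0, c) 1 * hbU + hcV

lemma diffElem_one_pow_dvd_diffElem [Fact p.Prime] {m : ℕ} (a : ZMod (p ^ m)) :
    diffElem p (1 : ZMod (p ^ m)) ^ (p ^ m / addOrderOf a) ∣ diffElem p a := by
  have hp : p.Prime := Fact.out
  have : NeZero (p ^ m) := ⟨pow_ne_zero _ hp.ne_zero⟩
  obtain ⟨j, hj, hgcd⟩ := (Nat.dvd_prime_pow hp).1 ((p ^ m).gcd_dvd_left a.val)
  have hord : p ^ m / addOrderOf a = p ^ j := by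
    rw [← ZMod.natCast_zmod_val a, ZMod.addOrderOf_coe _ (NeZero.ne _), hgcd,
      Nat.div_div_self (pow_dvd_pow p hj) (NeZero.ne _)]
  obtain ⟨t, ht⟩ : p ^ j ∣ a.val := hgcd ▸ Nat.gcd_dvd_right ..
  have ha : a = p ^ j • t • (1 : ZMod (p ^ m)) := by
    rw [← mul_nsmul', ← ht, nsmul_one, ZMod.natCast_zmod_val]
  rw [hord, ha, diffElem_pow_nsmul]
  exact pow_dvd_pow_of_dvd (diffElem_dvd_diffElem_nsmul t 1) _

lemma diffProd_zmod_eq_zero [Fact p.Prime] {m : ℕ} {S : Multiset (ZMod (p ^ m))}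
    (h : 1 ≤ crossNum S) : diffProd p S = 0 := by
  have hord : ∀ a ∈ S, addOrderOf a ∣ p ^ m := fun a _ =>
    addOrderOf_dvd_of_nsmul_eq_zero (by simp)
  have hdvd : diffElem p 1 ^ (S.map fun a => p ^ m / addOrderOf a).sum ∣ diffProd p S := by
    clear h hord
    induction S using Multiset.induction_on with
    | empty => simp
    | cons a S ih =>
      rw [Multiset.map_cons, Multiset.sum_cons, pow_add, diffProd_cons]
      exact mul_dvd_mul (diffElem_one_pow_dvd_diffElem a) ih
  have hle : p ^ m ≤ (S.map fun a => p ^ m / addOrderOf a).sum := by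
    rw [← Nat.cast_le (α := ℝ), natCast_sum_div_addOrderOf hord]
    exact le_mul_of_one_le_right (by positivity) h
  have hnil : diffElem p (1 : ZMod (p ^ m)) ^ p ^ m = 0 := by
    rw [← diffElem_pow_nsmul, nsmul_one, ZMod.natCast_self, diffElem_zero]
  exact eq_zero_of_zero_dvd (hnil ▸ (pow_dvd_pow _ hle).trans hdvd)

lemma vanishesAbove_zmod [Fact p.Prime] (m q : ℕ) :
    VanishesAbove p (ZMod (p ^ m)) q (1 - (q : ℝ)⁻¹) :=
  fun _ hS hκ => diffProd_zmod_eq_zero (one_le_crossNum hS hκ)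

lemma vanishesAbove_zmod_zero [Fact p.Prime] (m : ℕ) :
    VanishesAbove p (ZMod (p ^ m)) 0 (1 - ((p ^ m : ℕ) : ℝ)⁻¹) :=
  fun S _ => vanishesAbove_zmod m (p ^ m) S fun _ _ => addOrderOf_dvd_of_nsmul_eq_zero (by simp)

/-- The functional `u ↦ φ (([a] - 1) u)`: the difference of `φ` in direction `a`, when `φ` is
seen as a function on `P`. -/
noncomputable def dualDiff (a : P) (φ : Module.Dual (ZMod p) (ZMod p)[P]) :
    Module.Dual (ZMod p) (ZMod p)[P] :=
  φ ∘ₗ LinearMap.mulLeft (ZMod p) (diffElem p a)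

lemma dualDiff_apply (a : P) (φ : Module.Dual (ZMod p) (ZMod p)[P]) (u : (ZMod p)[P]) :
    dualDiff a φ u = φ (diffElem p a * u) := rfl

lemma dualDiff_single (a b : P) (φ : Module.Dual (ZMod p) (ZMod p)[P]) :
    dualDiff a φ (single b 1) = φ (single (a + b) 1) - φ (single b 1) := by
  rw [dualDiff_apply, diffElem, sub_mul, one_mul, single_mul_single, one_mul, map_sub]

lemma apply_diffProd_ne_zero {φ : Module.Dual (ZMod p) (ZMod p)[P]} {S : Multiset P} (h1 : φ 1 ≠ 0)
    (hS : ∀ T ≤ S, T ≠ 0 → φ (single T.sum 1) = 0) : φ (diffProd p S) ≠ 0 := by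
  induction S using Multiset.induction_on generalizing φ with
  | empty => simpa using h1
  | cons a S ih =>
    rw [diffProd_cons, ← dualDiff_apply]
    refine ih ?_ fun T hT hT0 => ?_
    · have ha : φ (single a 1) = 0 := by
        simpa using hS {a} (by simp) (by simp)
      rwa [one_def, dualDiff_single, add_zero, ha, zero_sub, neg_ne_zero, ← one_def]
    · rw [dualDiff_single, ← Multiset.sum_cons, hS _ (Multiset.cons_le_cons a hT) (by simp),
        hS T (hT.trans (Multiset.le_cons_self S a)) hT0, sub_zero]

/-- The functional reading off the coefficient of `[0]`, the indicator function of `0` in `P`. -/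
noncomputable def coeffZero (p : ℕ) (P : Type*) [AddCommGroup P] :
    Module.Dual (ZMod p) (ZMod p)[P] :=
  Finsupp.lapply 0 ∘ₗ (coeffLinearEquiv (ZMod p)).toLinearMap

@[simp] lemma coeffZero_one : coeffZero p P 1 = 1 := by simp [coeffZero, one_def]

lemma coeffZero_single_of_ne_zero {a : P} (ha : a ≠ 0) : coeffZero p P (single a 1) = 0 := by
  simp [coeffZero, ha]

lemma VanishesAbove.exists_sum_eq_zero [Nontrivial (ZMod p)] {q : ℕ} {κ : ℝ}
    (h : VanishesAbove p P q κ) {S : Multiset P} (hS : ∀ a ∈ S, addOrderOf a ∣ q)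
    (hκ : κ < crossNum S) : ∃ T ≤ S, T ≠ 0 ∧ T.sum = 0 := by
  by_contra! hzsf
  have hne : coeffZero p P (diffProd p S) ≠ 0 := apply_diffProd_ne_zero (by simp) fun T hT hT0 =>
    coeffZero_single_of_ne_zero (hzsf T hT hT0)
  exact hne (by rw [h S hS hκ, map_zero])

end GroupAlgebra

section RankTwo

variable {P Q : Type*} [AddCommGroup P] [AddCommGroup Q] {p : ℕ}

/-- An abelian `p`-group in which products of elements `[a] - 1` vanish as early as they do in
`C_{p^m} ⊕ C_{p^n}`. Unlike the shape of the group, this passes to subgroups at no cost. -/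
structure RankTwoLike (p : ℕ) (P : Type*) [AddCommGroup P] : Prop where
  exists_addOrderOf_eq_pow : ∀ a : P, ∃ k, addOrderOf a = p ^ k
  vanishesAbove : ∀ q, 0 < q → VanishesAbove p P q (2 * (1 - (q : ℝ)⁻¹))

lemma RankTwoLike.of_injective (hQ : RankTwoLike p Q) (f : P →+ Q) (hf : Function.Injective f) :
    RankTwoLike p P where
  exists_addOrderOf_eq_pow a := by
    rw [← addOrderOf_injective f hf]
    exact hQ.exists_addOrderOf_eq_pow (f a)
  vanishesAbove q hq := (hQ.vanishesAbove q hq).of_injective f hf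

variable [Fact p.Prime]

lemma rankTwoLike_zmod_prod_zmod (m n : ℕ) : RankTwoLike p (ZMod (p ^ m) × ZMod (p ^ n)) where
  exists_addOrderOf_eq_pow a := by
    have hdvd : addOrderOf a ∣ p ^ (m + n) := by
      refine addOrderOf_dvd_of_nsmul_eq_zero (Prod.ext ?_ ?_)
      · rw [Prod.smul_fst, pow_add, mul_nsmul]; simp
      · rw [Prod.smul_snd, pow_add, mul_nsmul']; simp
    exact ((Nat.dvd_prime_pow Fact.out).1 hdvd).imp fun _ h => h.2
  vanishesAbove q _ := by
    rw [two_mul]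
    exact (vanishesAbove_zmod m q).prod (vanishesAbove_zmod n q)

/-- In `P × ZMod (p ^ N)`, the element `(a, p ^ N / ord a)` has the same order as `a`, and the
second component of a sum of such elements measures the cross number modulo `1`. -/
lemma VanishesAbove.exists_crossNum_eq_natCast {N : ℕ} {κ : ℝ} (h : VanishesAbove p P (p ^ N) κ)
    {S : Multiset P} (hS : ∀ a ∈ S, addOrderOf a ∣ p ^ N)
    (hκ : κ + (1 - ((p ^ N : ℕ) : ℝ)⁻¹) < crossNum S) :
    ∃ T ≤ S, T ≠ 0 ∧ T.sum = 0 ∧ ∃ c : ℕ, crossNum T = c := by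
  let f : P → P × ZMod (p ^ N) := fun a => (a, (p ^ N / addOrderOf a : ℕ))
  have hf : ∀ a ∈ S, addOrderOf (f a) ∣ addOrderOf a := fun a ha => by
    refine addOrderOf_dvd_of_nsmul_eq_zero (Prod.ext (addOrderOf_nsmul_eq_zero a) ?_)
    rw [Prod.smul_snd, nsmul_eq_mul, ← Nat.cast_mul, Nat.mul_div_cancel' (hS a ha),
      ZMod.natCast_self, Prod.snd_zero]
  obtain ⟨T', hT', hT0, hsum⟩ := (h.prod (vanishesAbove_zmod N (p ^ N))).exists_sum_eq_zero
    (S := S.map f) (Multiset.forall_mem_map_iff.2 fun a ha => (hf a ha).trans (hS a ha))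
    (hκ.trans_le (crossNum_le_crossNum_map hf))
  obtain ⟨T, hT, rfl⟩ := exists_map_eq_of_le_map hT'
  have hfst : T.sum = 0 := by
    simpa [map_multiset_sum, f] using congrArg (AddMonoidHom.fst P _) hsum
  have hsnd : (((T.map fun a => p ^ N / addOrderOf a).sum : ℕ) : ZMod (p ^ N)) = 0 := by
    simpa [map_multiset_sum, Nat.cast_multiset_sum, f] using congrArg (AddMonoidHom.snd P _) hsum
  obtain ⟨c, hc⟩ := (ZMod.natCast_eq_zero_iff _ _).1 hsnd
  refine ⟨T, hT, by rintro rfl; simp at hT0, hfst, c, ?_⟩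
  have hmul : ((p ^ N : ℕ) : ℝ) * crossNum T = (p ^ N : ℕ) * c := by
    rw [← natCast_sum_div_addOrderOf fun a ha => hS a (Multiset.mem_of_le hT ha), hc, Nat.cast_mul]
  have hp : ((p ^ N : ℕ) : ℝ) ≠ 0 := by
    exact_mod_cast (pow_pos (Fact.out : p.Prime).pos N).ne'
  exact mul_left_cancel₀ hp hmul

namespace RankTwoLike

lemma addOrderOf_pos (hP : RankTwoLike p P) (a : P) : 0 < addOrderOf a := by
  obtain ⟨k, hk⟩ := hP.exists_addOrderOf_eq_pow a
  exact hk ▸ pow_pos (Fact.out : p.Prime).pos k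

lemma inv_addOrderOf_pos (hP : RankTwoLike p P) (a : P) : (0 : ℝ) < (addOrderOf a : ℝ)⁻¹ :=
  inv_pos.2 (by exact_mod_cast hP.addOrderOf_pos a)

lemma exists_forall_addOrderOf_dvd (hP : RankTwoLike p P) {S : Multiset P} (hS : S ≠ 0) :
    ∃ t ∈ S, ∀ a ∈ S, addOrderOf a ∣ addOrderOf t := by
  classical
  obtain ⟨t, ht, hmax⟩ := S.toFinset.exists_max_image addOrderOf (Multiset.toFinset_nonempty.2 hS)
  simp only [Multiset.mem_toFinset] at ht hmax
  refine ⟨t, ht, fun a ha => ?_⟩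
  obtain ⟨i, hi⟩ := hP.exists_addOrderOf_eq_pow a
  obtain ⟨j, hj⟩ := hP.exists_addOrderOf_eq_pow t
  have hle := hmax a ha
  rw [hi, hj] at hle ⊢
  exact pow_dvd_pow p ((Nat.pow_le_pow_iff_right (Fact.out : p.Prime).one_lt).1 hle)

lemma exists_sum_eq_zero (hP : RankTwoLike p P) {S : Multiset P} (hS : 2 ≤ crossNum S) :
    ∃ T ≤ S, T ≠ 0 ∧ T.sum = 0 := by
  have hS0 : S ≠ 0 := by rintro rfl; simp at hS; linarith
  obtain ⟨t, -, ht⟩ := hP.exists_forall_addOrderOf_dvd hS0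
  exact (hP.vanishesAbove _ (hP.addOrderOf_pos t)).exists_sum_eq_zero ht
    (by linarith [hP.inv_addOrderOf_pos t])

lemma exists_crossNum_eq_natCast (hP : RankTwoLike p P) {S : Multiset P} {t : P}
    (ht : ∀ a ∈ S, addOrderOf a ∣ addOrderOf t)
    (hS : 3 * (1 - (addOrderOf t : ℝ)⁻¹) < crossNum S) :
    ∃ T ≤ S, T ≠ 0 ∧ T.sum = 0 ∧ ∃ c : ℕ, crossNum T = c := by
  obtain ⟨N, hN⟩ := hP.exists_addOrderOf_eq_pow t
  have hvan := hP.vanishesAbove _ (hP.addOrderOf_pos t)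
  rw [hN] at ht hS hvan
  exact hvan.exists_crossNum_eq_natCast ht (by linarith)

/-- After removal of an element of maximal order from `T`, the rest still contains a nonempty
zero-sum sequence, whose complement in `T` is a second one. -/
lemma exists_crossNum_le_one_of_crossNum_eq_two (hP : RankTwoLike p P) {T : Multiset P}
    (hsum : T.sum = 0) (hT : crossNum T = 2) :
    ∃ T' ≤ T, T' ≠ 0 ∧ T'.sum = 0 ∧ crossNum T' ≤ 1 := by
  have hT0 : T ≠ 0 := by rintro rfl; simp at hT
  obtain ⟨t, ht, hmax⟩ := hP.exists_forall_addOrderOf_dvd hT0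
  obtain ⟨U, rfl⟩ := Multiset.exists_cons_of_mem ht
  rw [crossNum_cons] at hT
  obtain ⟨A, hA, hA0, hAsum⟩ := (hP.vanishesAbove _ (hP.addOrderOf_pos t)).exists_sum_eq_zero
    (S := U) (fun a ha => hmax a (Multiset.mem_cons_of_mem ha))
    (by linarith [hP.inv_addOrderOf_pos t])
  obtain ⟨B, rfl⟩ := Multiset.le_iff_exists_add.1 hA
  rw [crossNum_add] at hT
  rcases le_total (crossNum A) 1 with h | h
  · exact ⟨A, hA.trans (Multiset.le_cons_self _ t), hA0, hAsum, h⟩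
  · refine ⟨t ::ₘ B, Multiset.cons_le_cons t (Multiset.le_add_left B A), by simp, ?_, ?_⟩
    · simpa [hAsum] using hsum
    · rw [crossNum_cons]; linarith

lemma exists_crossNum_le_one_of_crossNum_eq_natCast (hP : RankTwoLike p P) (T : Multiset P)
    (hT0 : T ≠ 0) (hsum : T.sum = 0) (c : ℕ) (hc : crossNum T = c) :
    ∃ T' ≤ T, T' ≠ 0 ∧ T'.sum = 0 ∧ crossNum T' ≤ 1 := by
  induction T using Multiset.strongInductionOn generalizing c with
  | ih T ih =>
    obtain hc1 | rfl | hc3 : c ≤ 1 ∨ c = 2 ∨ 3 ≤ c := by omega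
    · exact ⟨T, le_rfl, hT0, hsum, by rw [hc]; exact_mod_cast hc1⟩
    · exact hP.exists_crossNum_le_one_of_crossNum_eq_two hsum (by exact_mod_cast hc)
    · have hc3' : (3 : ℝ) ≤ c := by exact_mod_cast hc3
      obtain ⟨t, ht, hmax⟩ := hP.exists_forall_addOrderOf_dvd hT0
      obtain ⟨U, rfl⟩ := Multiset.exists_cons_of_mem ht
      rw [crossNum_cons] at hc
      obtain ⟨A, hA, hA0, hAsum, d, hd⟩ := hP.exists_crossNum_eq_natCast (S := U)
        (fun a ha => hmax a (Multiset.mem_cons_of_mem ha))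
        (by linarith [hP.inv_addOrderOf_pos t])
      have hlt : A < t ::ₘ U := hA.trans_lt (Multiset.lt_cons_self U t)
      obtain ⟨T', hT', h⟩ := ih A hlt hA0 hAsum d hd
      exact ⟨T', hT'.trans hlt.le, h⟩

lemma exists_crossNum_le_one (hP : RankTwoLike p P) {S : Multiset P} (hS : 3 ≤ crossNum S) :
    ∃ T ≤ S, T ≠ 0 ∧ T.sum = 0 ∧ crossNum T ≤ 1 := by
  have hS0 : S ≠ 0 := by rintro rfl; simp at hS; linarith
  obtain ⟨t, -, ht⟩ := hP.exists_forall_addOrderOf_dvd hS0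
  obtain ⟨A, hA, hA0, hAsum, c, hc⟩ := hP.exists_crossNum_eq_natCast ht
    (by linarith [hP.inv_addOrderOf_pos t])
  obtain ⟨T, hT, h⟩ := hP.exists_crossNum_le_one_of_crossNum_eq_natCast A hA0 hAsum c hc
  exact ⟨T, hT.trans hA, h⟩

end RankTwoLike

end RankTwo

section Merging

variable {P G : Type*} [AddCommGroup P] [AddCommGroup G]

lemma crossNum_le_littleK_of_fst_eq_zero [Finite G] {R : Multiset (P × G)}
    (hR : IsZeroSumFree R) (h : ∀ r ∈ R, r.1 = 0) : crossNum R ≤ littleK G := by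
  have hord : ∀ r ∈ R, addOrderOf (AddMonoidHom.snd P G r) = addOrderOf r := fun r hr => by
    rw [Prod.addOrderOf, h r hr, addOrderOf_zero, Nat.lcm_one_left]; rfl
  rw [← crossNum_map_of_addOrderOf_eq hord]
  refine (hR.map (AddMonoidHom.snd P G) fun T hT hsnd => Prod.ext ?_ hsnd).crossNum_le_littleK
  change AddMonoidHom.fst P G T.sum = 0
  rw [map_multiset_sum]
  exact Multiset.sum_eq_zero <| Multiset.forall_mem_map_iff.2 fun r hr =>
    h r (Multiset.mem_of_le hT hr)

lemma inv_le_inv_addOrderOf_sum {d : ℕ} {T : Multiset (P × G)}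
    (hT : ∀ w ∈ T, addOrderOf w.2 ∣ d) (hsum : T.sum.1 = 0) :
    (d : ℝ)⁻¹ ≤ (addOrderOf T.sum : ℝ)⁻¹ := by
  refine natCast_inv_le_of_dvd (addOrderOf_dvd_of_nsmul_eq_zero (Prod.ext ?_ ?_))
  · rw [Prod.smul_fst, hsum, smul_zero, Prod.fst_zero]
  · change AddMonoidHom.snd P G (d • T.sum) = 0
    rw [Multiset.smul_sum, map_multiset_sum, Multiset.map_map]
    exact Multiset.sum_eq_zero <| Multiset.forall_mem_map_iff.2 fun w hw =>
      addOrderOf_dvd_iff_nsmul_eq_zero.1 (hT w hw)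

lemma exists_isZeroSumFree_sum_cons_add {d : ℕ} {U W : Multiset (P × G)} {T : Multiset P}
    (hUW : IsZeroSumFree (U + W)) (hW : ∀ w ∈ W, addOrderOf w.2 ∣ d) (hT : T ≤ W.map Prod.fst)
    (hT0 : T ≠ 0) (hsum : T.sum = 0) :
    ∃ A B : Multiset (P × G), W = A + B ∧ A ≠ 0 ∧ A.map Prod.fst = T ∧ A.sum.1 = 0 ∧
      IsZeroSumFree (A.sum ::ₘ U + B) ∧ (d : ℝ)⁻¹ ≤ (addOrderOf A.sum : ℝ)⁻¹ := by
  obtain ⟨A, hA, rfl⟩ := exists_map_eq_of_le_map hT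
  obtain ⟨B, rfl⟩ := Multiset.le_iff_exists_add.1 hA
  have hA0 : A ≠ 0 := by rintro rfl; simp at hT0
  have hAsum : A.sum.1 = 0 := (map_multiset_sum (AddMonoidHom.fst P G) A).trans hsum
  refine ⟨A, B, rfl, hA0, rfl, hAsum, ?_, ?_⟩
  · rw [add_left_comm] at hUW
    rw [Multiset.cons_add]
    exact hUW.sum_cons hA0
  · exact inv_le_inv_addOrderOf_sum (fun w hw => hW w (Multiset.mem_of_le hA hw)) hAsum

variable {p : ℕ} [Fact p.Prime]

namespace RankTwoLike

lemma addOrderOf_eq_mul (hP : RankTwoLike p P) (hG : ¬ p ∣ AddMonoid.exponent G) (r : P × G) :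
    addOrderOf r = addOrderOf r.1 * addOrderOf r.2 := by
  obtain ⟨k, hk⟩ := hP.exists_addOrderOf_eq_pow r.1
  have hcop : p.Coprime (addOrderOf r.2) := (Nat.Prime.coprime_iff_not_dvd Fact.out).2 fun h =>
    hG (h.trans (AddMonoid.addOrder_dvd_exponent r.2))
  rw [Prod.addOrderOf, hk, (hcop.pow_left k).lcm_eq_mul]

lemma crossNum_eq_inv_mul_crossNum_map_fst (hP : RankTwoLike p P)
    (hG : ¬ p ∣ AddMonoid.exponent G) {d : ℕ} (hd : 0 < d) {W : Multiset (P × G)}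
    (hW : ∀ w ∈ W, addOrderOf w.2 = d) :
    crossNum W = (d : ℝ)⁻¹ * crossNum (W.map Prod.fst) := by
  have hd' : (d : ℝ) ≠ 0 := by exact_mod_cast hd.ne'
  rw [crossNum_map_eq_mul (c := d), inv_mul_cancel_left₀ hd']
  intro w hw
  rw [hP.addOrderOf_eq_mul hG, hW w hw, Nat.cast_mul, mul_inv_rev, mul_inv_cancel_left₀ hd']

/-- Zero-sum subsequences `T` of the first components with `k(T) ≤ 1` are replaced by their sums
as long as the first components have cross number at least `3`. -/
lemma exists_fst_eq_zero_and_crossNum_le (hP : RankTwoLike p P) (hG : ¬ p ∣ AddMonoid.exponent G)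
    {d : ℕ} (hd : 0 < d) {U W : Multiset (P × G)} (hW : ∀ w ∈ W, addOrderOf w.2 = d)
    (hUW : IsZeroSumFree (U + W)) :
    ∃ V : Multiset (P × G), (∀ v ∈ V, v.1 = 0) ∧ IsZeroSumFree (U + V) ∧
      crossNum (U + W) ≤ crossNum (U + V) + 2 * (d : ℝ)⁻¹ := by
  have hd' : (0 : ℝ) ≤ (d : ℝ)⁻¹ := by positivity
  induction W using Multiset.strongInductionOn generalizing U with
  | ih W ih =>
    have hWd := hP.crossNum_eq_inv_mul_crossNum_map_fst hG hd hW
    have hdvd : ∀ w ∈ W, addOrderOf w.2 ∣ d := fun w hw => (hW w hw).dvd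
    rcases le_or_gt (crossNum (W.map Prod.fst)) 2 with h2 | h2
    · refine ⟨0, by simp, hUW.mono (by simp), ?_⟩
      have := mul_le_mul_of_nonneg_left h2 hd'
      rw [crossNum_add, add_zero]
      linarith
    rcases lt_or_ge (crossNum (W.map Prod.fst)) 3 with h3 | h3
    · obtain ⟨T, hT, hT0, hsum⟩ := hP.exists_sum_eq_zero h2.le
      obtain ⟨A, B, -, -, -, hA, hzsf, hord⟩ :=
        exists_isZeroSumFree_sum_cons_add hUW hdvd hT hT0 hsum
      refine ⟨{A.sum}, by simpa using hA, hzsf.mono ?_, ?_⟩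
      · rw [add_comm, Multiset.singleton_add]
        exact Multiset.le_add_right _ _
      · have := mul_le_mul_of_nonneg_left h3.le hd'
        rw [crossNum_add, crossNum_add, crossNum_singleton]
        linarith
    · obtain ⟨T, hT, hT0, hsum, hle⟩ := hP.exists_crossNum_le_one h3
      obtain ⟨A, B, rfl, hA0, rfl, hA, hzsf, hord⟩ :=
        exists_isZeroSumFree_sum_cons_add hUW hdvd hT hT0 hsum
      obtain ⟨V, hV, hUV, hk⟩ := ih B (lt_add_of_pos_left B (pos_iff_ne_zero.2 hA0))
        (fun w hw => hW w (Multiset.mem_add.2 (.inr hw))) hzsf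
      refine ⟨A.sum ::ₘ V, Multiset.forall_mem_cons.2 ⟨hA, hV⟩, by simpa using hUV, ?_⟩
      have hAd := hP.crossNum_eq_inv_mul_crossNum_map_fst hG hd fun w hw =>
        hW w (Multiset.mem_add.2 (.inl hw))
      have := mul_le_mul_of_nonneg_left hle hd'
      simp only [crossNum_add, crossNum_cons, Multiset.cons_add] at hk ⊢
      linarith

lemma crossNum_le_littleK_add_sum [Finite G] (hP : RankTwoLike p P)
    (hG : ¬ p ∣ AddMonoid.exponent G) {D : Finset ℕ} (hD : ∀ d ∈ D, 0 < d)
    {R : Multiset (P × G)} (hR : IsZeroSumFree R)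
    (hRD : ∀ r ∈ R, r.1 ≠ 0 → addOrderOf r.2 ∈ D) :
    crossNum R ≤ littleK G + ∑ d ∈ D, 2 * (d : ℝ)⁻¹ := by
  classical
  induction D using Finset.induction_on generalizing R with
  | empty =>
    rw [Finset.sum_empty, add_zero]
    exact crossNum_le_littleK_of_fst_eq_zero hR fun r hr => by_contra fun h => by
      simpa using hRD r hr h
  | insert d D hd ih =>
    rw [Finset.forall_mem_insert] at hD
    set U := R.filter fun r => ¬ addOrderOf r.2 = d
    set W := R.filter fun r => addOrderOf r.2 = d
    have hUW : U + W = R := by rw [add_comm]; exact Multiset.filter_add_not _ _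
    obtain ⟨V, hV, hUV, hk⟩ := hP.exists_fst_eq_zero_and_crossNum_le hG hD.1 (U := U) (W := W)
      (fun w hw => (Multiset.mem_filter.1 hw).2) (by rwa [hUW])
    have hUVD : ∀ r ∈ U + V, r.1 ≠ 0 → addOrderOf r.2 ∈ D := fun r hr hr0 => by
      rcases Multiset.mem_add.1 hr with hrU | hrV
      · obtain ⟨hrR, hrd⟩ := Multiset.mem_filter.1 hrU
        exact (Finset.mem_insert.1 (hRD r hrR hr0)).resolve_left hrd
      · exact absurd (hV r hrV) hr0
    rw [hUW] at hk
    rw [Finset.sum_insert hd]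
    linarith [ih hD.2 hUV hUVD]

end RankTwoLike

end Merging

section Degree

open AddMonoidAlgebra

variable {P Q G : Type*} [AddCommGroup P] [AddCommGroup Q] [AddCommGroup G] {p : ℕ}
  {φ : Module.Dual (ZMod p) (ZMod p)[P]} {ψ : Module.Dual (ZMod p) (ZMod p)[Q]} {ε : ℝ}

/-- A functional `φ` on `𝔽_p[P]`, seen as a function on `P`, has degree at most `ε` if its iterated
difference along any sequence of cross number larger than `ε` is zero: differentiating in
direction `a` costs `1 / ord a`. -/
def HasDegreeLE (φ : Module.Dual (ZMod p) (ZMod p)[P]) (ε : ℝ) : Prop :=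
  ∀ S : Multiset P, ε < crossNum S → ∀ u, φ (diffProd p S * u) = 0

lemma VanishesAbove.hasDegreeLE (h : VanishesAbove p P 0 ε)
    (φ : Module.Dual (ZMod p) (ZMod p)[P]) : HasDegreeLE φ ε := fun S hS u => by
  rw [h S (fun _ _ => dvd_zero _) hS, zero_mul, map_zero]

lemma HasDegreeLE.dualDiff (h : HasDegreeLE φ ε) (a : P) :
    HasDegreeLE (dualDiff a φ) (ε - (addOrderOf a : ℝ)⁻¹) := fun S hS u => by
  rw [dualDiff_apply, ← mul_assoc, ← diffProd_cons]
  exact h (a ::ₘ S) (by rw [crossNum_cons]; linarith) u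

lemma HasDegreeLE.nonneg (h : HasDegreeLE φ ε) (h1 : φ 1 ≠ 0) : 0 ≤ ε := by
  by_contra! hε
  exact h1 (by simpa using h 0 (by simpa using hε) 1)

lemma HasDegreeLE.apply_diffElem_mul_eq_zero [Fact p.Prime] (h : HasDegreeLE φ ε)
    (hε : ε < (p : ℝ)⁻¹) {a : P} (ha : p • a = 0) (u : (ZMod p)[P]) : φ (diffElem p a * u) = 0 := by
  rcases eq_or_ne a 0 with rfl | ha0
  · rw [diffElem_zero, zero_mul, map_zero]
  · simpa [diffProd] using h {a} (by rwa [crossNum_singleton, addOrderOf_eq_prime ha ha0]) u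

lemma HasDegreeLE.of_comp_mapDomainRingHom (h : HasDegreeLE φ ε) {f : P →+ Q}
    (hf : Function.Surjective f) {c : ℝ} (hc : 0 < c)
    (hord : ∀ a, f a ≠ 0 → (addOrderOf (f a) : ℝ)⁻¹ = c * (addOrderOf a : ℝ)⁻¹)
    (hψ : ∀ u, ψ (mapDomainRingHom (ZMod p) f u) = φ u) : HasDegreeLE ψ (c * ε) := by
  intro S hS u
  by_cases h0 : (0 : Q) ∈ S
  · rw [diffProd_eq_zero_of_zero_mem h0, zero_mul, map_zero]
  obtain ⟨u, rfl⟩ := mapDomainRingHom_surjective hf u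
  obtain ⟨S, rfl⟩ : ∃ S', Multiset.map f S' = S := Multiset.map_surjective_of_surjective hf S
  rw [crossNum_map_eq_mul fun a ha => hord a fun hfa =>
    h0 (hfa ▸ Multiset.mem_map_of_mem f ha)] at hS
  rw [← mapDomainRingHom_diffProd, ← map_mul, hψ]
  exact h S (lt_of_mul_lt_mul_left hS hc.le) u

lemma exists_dual_comp_mapDomainRingHom_eq {f : P →+ Q} (hf : Function.Surjective f)
    (hφ : ∀ a, f a = 0 → ∀ u, φ (diffElem p a * u) = 0) :
    ∃ ψ : Module.Dual (ZMod p) (ZMod p)[Q], ∀ u, ψ (mapDomainRingHom (ZMod p) f u) = φ u := by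
  refine ⟨φ ∘ₗ mapDomainLinearMap (ZMod p) (ZMod p) (Function.surjInv hf), fun u => ?_⟩
  induction u using induction_linear with
  | zero => simp
  | add u v hu hv => rw [map_add, map_add, hu, hv, map_add]
  | single a c =>
    set b := Function.surjInv hf (f a)
    have hb : f (b - a) = 0 := by rw [map_sub, Function.surjInv_eq hf, sub_self]
    have hba := hφ (b - a) hb (single a c)
    rw [diffElem, sub_mul, one_mul, single_mul_single, sub_add_cancel, one_mul, map_sub,
      sub_eq_zero] at hba
    simpa using hba

/-- A functional `φ` that proves `R` zero-sum free: as a function on `P`, it separates `0` from the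
first components of all nonempty subsequence sums of `R` with zero second component. -/
structure Certifies (φ : Module.Dual (ZMod p) (ZMod p)[P]) (R : Multiset (P × G)) : Prop where
  apply_one_ne_zero : φ 1 ≠ 0
  apply_single_sum_fst : ∀ T ≤ R, T ≠ 0 → T.sum.2 = 0 → φ (single T.sum.1 1) = 0

lemma IsZeroSumFree.certifies_coeffZero [Nontrivial (ZMod p)] {R : Multiset (P × G)}
    (hR : IsZeroSumFree R) : Certifies (coeffZero p P) R where
  apply_one_ne_zero := by simp
  apply_single_sum_fst T hT hT0 hsum :=
    coeffZero_single_of_ne_zero fun h => hR T hT hT0 (Prod.ext h hsum)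

namespace Certifies

variable {R : Multiset (P × G)}

lemma isZeroSumFree (h : Certifies φ R) : IsZeroSumFree R := fun T hT hT0 hsum =>
  h.apply_one_ne_zero <| by simpa [hsum, one_def] using h.apply_single_sum_fst T hT hT0

lemma dualDiff {r : P × G} (h : Certifies φ (r ::ₘ R)) (hr : r.2 = 0) :
    Certifies (dualDiff r.1 φ) R where
  apply_one_ne_zero := by
    have hr1 : φ (single r.1 1) = 0 := by
      simpa [hr] using h.apply_single_sum_fst {r} (by simp) (by simp)
    rw [one_def, dualDiff_single, add_zero, hr1, zero_sub, neg_ne_zero, ← one_def]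
    exact h.apply_one_ne_zero
  apply_single_sum_fst T hT hT0 hsum := by
    have hcons := h.apply_single_sum_fst (r ::ₘ T) (Multiset.cons_le_cons r hT) (by simp)
      (by simp [hr, hsum])
    rw [Multiset.sum_cons, Prod.fst_add] at hcons
    rw [dualDiff_single, hcons,
      h.apply_single_sum_fst T (hT.trans (Multiset.le_cons_self R r)) hT0 hsum, sub_zero]

lemma map (h : Certifies φ R) {f : P →+ Q}
    (hψ : ∀ u, ψ (mapDomainRingHom (ZMod p) f u) = φ u) :
    Certifies ψ (R.map (f.prodMap (.id G))) where
  apply_one_ne_zero := by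
    rw [← map_one (mapDomainRingHom (ZMod p) f), hψ]
    exact h.apply_one_ne_zero
  apply_single_sum_fst T hT hT0 hsum := by
    obtain ⟨T, hTR, rfl⟩ := exists_map_eq_of_le_map hT
    rw [← map_multiset_sum] at hsum ⊢
    have hT := h.apply_single_sum_fst T hTR (by rintro rfl; simp at hT0) hsum
    rwa [← hψ, mapDomainRingHom_apply, mapDomain_single] at hT

end Certifies

end Degree

section Descent

open AddMonoidAlgebra

variable {P G : Type*} [AddCommGroup P] [AddCommGroup G] {p : ℕ} [Fact p.Prime]

namespace RankTwoLike

lemma inv_addOrderOf_prime_nsmul (hP : RankTwoLike p P) {a : P} (ha : a ≠ 0) :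
    (addOrderOf (p • a) : ℝ)⁻¹ = p * (addOrderOf a : ℝ)⁻¹ := by
  have hp : p.Prime := Fact.out
  obtain ⟨k, hk⟩ := hP.exists_addOrderOf_eq_pow a
  have hdvd : p ∣ addOrderOf a := by
    rw [hk]
    refine dvd_pow_self p ?_
    rintro rfl
    exact ha (AddMonoid.addOrderOf_eq_one_iff.1 (by rw [hk, pow_zero]))
  rw [addOrderOf_nsmul_of_dvd hp.ne_zero hdvd, Nat.cast_div_charZero hdvd, inv_div, div_eq_mul_inv]

lemma card_range_nsmul_lt [Finite P] [Nontrivial P] (hP : RankTwoLike p P) :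
    Nat.card (nsmulAddMonoidHom p : P →+ P).range < Nat.card P := by
  suffices h : ¬ Function.Surjective (nsmulAddMonoidHom p : P →+ P) by
    obtain ⟨a, ha⟩ := not_forall.1 h
    exact Finite.card_subtype_lt ha
  intro hsurj
  obtain ⟨a, ha⟩ := exists_ne (0 : P)
  have hord : addOrderOf (p • a) = addOrderOf a :=
    addOrderOf_injective (nsmulAddMonoidHom p) (Finite.injective_iff_surjective.2 hsurj) a
  have hinv := hP.inv_addOrderOf_prime_nsmul ha
  rw [hord, eq_comm, mul_eq_right₀ (hP.inv_addOrderOf_pos a).ne'] at hinv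
  exact (Fact.out : p.Prime).ne_one (by exact_mod_cast hinv)

lemma mul_crossNum_le [Finite G] (hP : RankTwoLike p P) (hG : ¬ p ∣ AddMonoid.exponent G)
    {Q : Type*} [AddCommGroup Q] (hQ : RankTwoLike p Q) {f : P →+ Q} {c : ℝ} (hc : 1 ≤ c)
    (hf : ∀ a, a ≠ 0 → (addOrderOf (f a) : ℝ)⁻¹ = c * (addOrderOf a : ℝ)⁻¹)
    {R : Multiset (P × G)} (hR : IsZeroSumFree R) :
    c * crossNum R ≤ crossNum (R.map (f.prodMap (.id G))) + (c - 1) * littleK G := by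
  classical
  set A := R.filter fun r => r.1 = 0
  set B := R.filter fun r => ¬ r.1 = 0
  have hAB : A + B = R := Multiset.filter_add_not _ _
  have hA : crossNum (A.map (f.prodMap (.id G))) = crossNum A :=
    crossNum_map_of_addOrderOf_eq fun r hr => by
      rw [hP.addOrderOf_eq_mul hG r, hQ.addOrderOf_eq_mul hG, (Multiset.mem_filter.1 hr).2]
      simp [(Multiset.mem_filter.1 hr).2]
  have hB : crossNum (B.map (f.prodMap (.id G))) = c * crossNum B :=
    crossNum_map_eq_mul fun r hr => by
      rw [hP.addOrderOf_eq_mul hG r, hQ.addOrderOf_eq_mul hG, Nat.cast_mul, Nat.cast_mul, mul_inv,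
        mul_inv, ← mul_assoc, ← hf _ (Multiset.mem_filter.1 hr).2]
      rfl
  have hAG : crossNum A ≤ littleK G := crossNum_le_littleK_of_fst_eq_zero
    (hR.mono (Multiset.filter_le _ _)) fun r hr => (Multiset.mem_filter.1 hr).2
  have := mul_le_mul_of_nonneg_left hAG (sub_nonneg.2 hc)
  rw [← hAB, Multiset.map_add, crossNum_add, crossNum_add, hA, hB]
  linarith

lemma exists_certifies_range_nsmul [Finite G] (hP : RankTwoLike p P)
    (hG : ¬ p ∣ AddMonoid.exponent G) {φ : Module.Dual (ZMod p) (ZMod p)[P]} {ε : ℝ}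
    (hφ : HasDegreeLE φ ε) (hε : ε < (p : ℝ)⁻¹) {R : Multiset (P × G)} (hR : Certifies φ R) :
    ∃ (ψ : Module.Dual (ZMod p) (ZMod p)[(nsmulAddMonoidHom p : P →+ P).range])
      (R' : Multiset ((nsmulAddMonoidHom p : P →+ P).range × G)),
      HasDegreeLE ψ (p * ε) ∧ Certifies ψ R' ∧ R'.card = R.card ∧
        p * crossNum R ≤ crossNum R' + (p - 1) * littleK G := by
  set f := (nsmulAddMonoidHom p : P →+ P).rangeRestrict
  have hp : (1 : ℝ) ≤ p := by exact_mod_cast (Fact.out : p.Prime).one_le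
  have hf : Function.Surjective f := AddMonoidHom.rangeRestrict_surjective _
  have hord : ∀ a, a ≠ 0 → (addOrderOf (f a) : ℝ)⁻¹ = p * (addOrderOf a : ℝ)⁻¹ := fun a ha => by
    rw [← AddSubgroup.addOrderOf_coe]
    exact hP.inv_addOrderOf_prime_nsmul ha
  obtain ⟨ψ, hψ⟩ := exists_dual_comp_mapDomainRingHom_eq hf fun a ha =>
    hφ.apply_diffElem_mul_eq_zero hε (congrArg Subtype.val ha)
  exact ⟨ψ, R.map (f.prodMap (.id G)),
    hφ.of_comp_mapDomainRingHom hf (by linarith) (fun a ha => hord a fun h0 => ha (by simp [h0]))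
      hψ, hR.map hψ, Multiset.card_map _ _, hP.mul_crossNum_le hG
      (hP.of_injective _ (AddSubgroup.subtype_injective _)) hp hord hR.isZeroSumFree⟩

theorem crossNum_le_littleK_add {P : Type*} [AddCommGroup P] [Finite P] [Finite G]
    (hP : RankTwoLike p P) (hG : ¬ p ∣ AddMonoid.exponent G)
    (hsum : ∑ d ∈ (AddMonoid.exponent G).divisors.erase 1, 2 * (d : ℝ)⁻¹ ≤ (p : ℝ)⁻¹)
    {φ : Module.Dual (ZMod p) (ZMod p)[P]} {ε : ℝ} (hφ : HasDegreeLE φ ε) (R : Multiset (P × G))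
    (hR : Certifies φ R) : crossNum R ≤ littleK G + ε := by
  by_cases hsnd : ∃ r ∈ R, r.2 = 0
  · obtain ⟨r, hr, hr0⟩ := hsnd
    obtain ⟨S, hS⟩ := Multiset.exists_cons_of_mem hr
    have : S.card < R.card := by simp [hS]
    have := crossNum_le_littleK_add hP hG hsum (hφ.dualDiff r.1) S ((hS ▸ hR).dualDiff hr0)
    rw [hS, crossNum_cons, hP.addOrderOf_eq_mul hG, hr0, addOrderOf_zero, mul_one]
    linarith
  push Not at hsnd
  rcases le_or_gt (p : ℝ)⁻¹ ε with hε | hε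
  · have hD : ∀ r ∈ R, r.1 ≠ 0 → addOrderOf r.2 ∈ (AddMonoid.exponent G).divisors.erase 1 :=
      fun r hr _ => Finset.mem_erase.2 ⟨mt AddMonoid.addOrderOf_eq_one_iff.1 (hsnd r hr),
        Nat.mem_divisors.2 ⟨AddMonoid.addOrder_dvd_exponent _,
          AddMonoid.exponent_ne_zero_of_finite⟩⟩
    have := hP.crossNum_le_littleK_add_sum hG
      (fun d hd => Nat.pos_of_mem_divisors (Finset.mem_of_mem_erase hd)) hR.isZeroSumFree hD
    linarith
  rcases subsingleton_or_nontrivial P with _ | _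
  · have := crossNum_le_littleK_of_fst_eq_zero hR.isZeroSumFree fun r _ => Subsingleton.elim _ _
    linarith [hφ.nonneg hR.apply_one_ne_zero]
  · have hp : (0 : ℝ) < p := by exact_mod_cast (Fact.out : p.Prime).pos
    obtain ⟨ψ, R', hψ, hR', _, hle⟩ := hP.exists_certifies_range_nsmul hG hφ hε hR
    have := hP.card_range_nsmul_lt
    have := crossNum_le_littleK_add (hP.of_injective _ (AddSubgroup.subtype_injective _)) hG hsum
      hψ R' hR'
    exact le_of_mul_le_mul_left (by linarith) hp
termination_by Nat.card P + R.card
decreasing_by all_goals omega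

end RankTwoLike

end Descent

section Main

variable {p : ℕ} {G : Type*} [AddCommGroup G] [Finite G]

lemma littleK_prod_le [Fact p.Prime] {P : Type*} [AddCommGroup P] [Finite P]
    (hP : RankTwoLike p P) {κ : ℝ} (hκ : VanishesAbove p P 0 κ)
    (hG : ¬ p ∣ AddMonoid.exponent G)
    (hsum : ∑ d ∈ (AddMonoid.exponent G).divisors.erase 1, 2 * (d : ℝ)⁻¹ ≤ (p : ℝ)⁻¹) :
    littleK (P × G) ≤ littleK G + κ :=
  littleK_le fun R hR =>
    hP.crossNum_le_littleK_add hG hsum (hκ.hasDegreeLE _) R hR.certifies_coeffZero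

lemma sum_divisors_erase_one_le {n : ℕ} (hn : n ≠ 0)
    (h : ∑ d ∈ n.divisors, (1 : ℚ) / d ≤ 1 + 1 / (2 * p)) :
    ∑ d ∈ n.divisors.erase 1, 2 * (d : ℝ)⁻¹ ≤ (p : ℝ)⁻¹ := by
  rw [← Finset.add_sum_erase _ _ (Nat.one_mem_divisors.2 hn), Nat.cast_one, div_one,
    add_le_add_iff_left] at h
  have h' : ∑ d ∈ n.divisors.erase 1, (d : ℝ)⁻¹ ≤ (p : ℝ)⁻¹ / 2 := by
    rw [← Rat.cast_le (K := ℝ)] at h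
    push_cast at h
    simpa [div_eq_mul_inv, mul_comm] using h
  rw [← Finset.mul_sum]
  linarith

lemma TwoSmall.sum_divisors_le {n : ℕ} (hp : 0 < p) (h : TwoSmall p n) :
    ∑ d ∈ n.divisors, (1 : ℚ) / d ≤ 1 + 1 / (2 * p) := by
  refine h.2.le.trans ?_
  have : (0 : ℚ) < p := by exact_mod_cast hp
  calc (2 * p + 2 : ℚ) / (2 * p + 1) = 1 + 1 / (2 * p + 1) := by field_simp; ring
    _ ≤ 1 + 1 / (2 * p) := by gcongr; linarith

theorem littleK_zmod_pow_prod_of_twoSmall_general (hp : p.Prime)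
    (hG : ¬ p ∣ AddMonoid.exponent G)
    (h : ∑ d ∈ (AddMonoid.exponent G).divisors, (1 : ℚ) / d ≤ 1 + 1 / (2 * p)) (m n : ℕ) :
    littleK (ZMod (p ^ m) × ZMod (p ^ n) × G)
      = littleK (ZMod (p ^ m)) + littleK (ZMod (p ^ n)) + littleK G := by
  have : Fact p.Prime := ⟨hp⟩
  have hfin : ∀ k, NeZero (p ^ k) := fun k => ⟨pow_ne_zero k hp.ne_zero⟩
  have hcyc : ∀ k, 1 - ((p ^ k : ℕ) : ℝ)⁻¹ ≤ littleK (ZMod (p ^ k)) := fun k => by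
    simpa only [ZMod.addOrderOf_one] using one_sub_inv_addOrderOf_le_littleK (1 : ZMod (p ^ k))
  refine le_antisymm ?_ ?_
  · calc littleK (ZMod (p ^ m) × ZMod (p ^ n) × G)
        ≤ littleK ((ZMod (p ^ m) × ZMod (p ^ n)) × G) :=
          littleK_le_of_injective (AddEquiv.prodAssoc.symm : _ ≃+ _).toAddMonoidHom
            (AddEquiv.injective _)
      _ ≤ littleK G + (1 - ((p ^ m : ℕ) : ℝ)⁻¹ + (1 - ((p ^ n : ℕ) : ℝ)⁻¹)) :=
          littleK_prod_le (rankTwoLike_zmod_prod_zmod m n)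
            ((vanishesAbove_zmod_zero m).prod (vanishesAbove_zmod_zero n)) hG
            (sum_divisors_erase_one_le AddMonoid.exponent_ne_zero_of_finite h)
      _ ≤ littleK (ZMod (p ^ m)) + littleK (ZMod (p ^ n)) + littleK G := by
          linarith [hcyc m, hcyc n]
  · rw [add_assoc]
    exact (add_le_add_right littleK_add_le_littleK_prod _).trans littleK_add_le_littleK_prod

end Main

/-- If `p` is a prime that is 2-small with respect to `exp(G)`, then for all positive
integers `m, n`: `k(C_{p^m} ⊕ C_{p^n} ⊕ G) = k(C_{p^m}) + k(C_{p^n}) + k(G)`. -/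
theorem littleK_zmod_pow_prod_of_twoSmall
    (p : ℕ) (hp : p.Prime) (G : Type*) [AddCommGroup G] [Finite G]
    (h2 : TwoSmall p (AddMonoid.exponent G)) (m n : ℕ) (hm : 0 < m) (hn : 0 < n) :
    littleK (ZMod (p ^ m) × ZMod (p ^ n) × G)
      = littleK (ZMod (p ^ m)) + littleK (ZMod (p ^ n)) + littleK G :=
  littleK_zmod_pow_prod_of_twoSmall_general hp h2.1 (h2.sum_divisors_le hp.pos) m n
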